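/- Let f : [-π,π] → ℝ be continuous, even, strictly positive, and satisfy f(-π) = f(π). Let T_n(f) be the n×n Toeplitz matrix with entries γ_f(l-m), where γ_f(j) = ∫_{-π}^{π} f(λ) e^{ijλ} dλ. Then lim_{n→∞} (1/n) log det T_n(f) = (1/(2π)) ∫_{-π}^{π} log(2π f(λ)) dλ. -/

import Mathlib

open MeasureTheory Real Complex Filter BigOperators

/-!
Integrate against `dλ / 2π` and absorb the factor `2π` into `f`, so that `T_n(f)` consists of
Fourier coefficients of `f`. Let `v` be a unit eigenvector of `T_n(f)` with eigenvalue `a`, and let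
`p_v` be the squared modulus of its trigonometric polynomial. Then `p_v` is a probability density
and `a = ∫ f p_v`, so Jensen's inequality gives `∫ (log f) p_v ≤ log a`. Since the `p_v` of an
eigenbasis add up to the constant `n`, summation over the eigenvectors yields
`n ∫ log f ≤ log det T_n(f)`.

Jensen's inequality for `f⁻¹` gives the reverse bound `log a ≤ ∫ (log f) p_v + a ∫ f⁻¹ p_v - 1`.
Here the terms `a ∫ f⁻¹ p_v` add up to `tr (T_n(f) T_n(f⁻¹))`, and
`tr (T_n(f) T_n(f⁻¹)) / n → ∫ f f⁻¹ = 1` because this quantity is a Cesàro mean of the partial sums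
of the Parseval series of `f` and `f⁻¹`. The two bounds thus differ by `o(n)`.
-/

open scoped Matrix InnerProductSpace ComplexConjugate ComplexOrder Topology

section JensenLog

variable {X : Type*} [MeasurableSpace X] {μ : Measure X} {f w : X → ℝ}

lemma integral_mul_pos_of_integral_pos (hf : ∀ᵐ x ∂μ, 0 < f x) (hw : 0 ≤ᵐ[μ] w)
    (hfw : Integrable (fun x => f x * w x) μ) (hw_pos : 0 < ∫ x, w x ∂μ) :
    0 < ∫ x, f x * w x ∂μ := by
  have hfw_nonneg : 0 ≤ᵐ[μ] fun x => f x * w x := by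
    filter_upwards [hf, hw] with x hfx hwx using mul_nonneg hfx.le hwx
  refine (integral_nonneg_of_ae hfw_nonneg).lt_of_ne' fun h_zero => hw_pos.ne' ?_
  refine integral_eq_zero_of_ae ?_
  filter_upwards [hf, (integral_eq_zero_iff_of_nonneg_ae hfw_nonneg hfw).1 h_zero] with x hfx hx
  exact (mul_eq_zero.1 hx).resolve_left hfx.ne'

lemma integral_log_mul_le_log_integral_mul (hf : ∀ᵐ x ∂μ, 0 < f x) (hw : 0 ≤ᵐ[μ] w)
    (hw_one : ∫ x, w x ∂μ = 1) (hfw : Integrable (fun x => f x * w x) μ)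
    (hlog : Integrable (fun x => Real.log (f x) * w x) μ) :
    ∫ x, Real.log (f x) * w x ∂μ ≤ Real.log (∫ x, f x * w x ∂μ) := by
  set c := ∫ x, f x * w x ∂μ
  have hc : 0 < c := integral_mul_pos_of_integral_pos hf hw hfw (by simp [hw_one])
  have hw_int : Integrable w μ := integrable_of_integral_eq_one hw_one
  calc ∫ x, Real.log (f x) * w x ∂μ
      ≤ ∫ x, ((Real.log c - 1) * w x + c⁻¹ * (f x * w x)) ∂μ := by
        refine integral_mono_ae hlog ((hw_int.const_mul _).add (hfw.const_mul _)) ?_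
        filter_upwards [hf, hw] with x hfx hwx
        have h_tangent := Real.log_le_sub_one_of_pos (div_pos hfx hc)
        rw [Real.log_div hfx.ne' hc.ne', div_eq_inv_mul] at h_tangent
        calc Real.log (f x) * w x ≤ (Real.log c - 1 + c⁻¹ * f x) * w x :=
              mul_le_mul_of_nonneg_right (by linarith) hwx
          _ = _ := by ring
    _ = Real.log c := by
        rw [integral_add (hw_int.const_mul _) (hfw.const_mul _), integral_const_mul,
          integral_const_mul, hw_one, inv_mul_cancel₀ hc.ne']
        ring

lemma log_le_integral_log_mul_add (hf : ∀ᵐ x ∂μ, 0 < f x) (hw : 0 ≤ᵐ[μ] w)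
    (hw_one : ∫ x, w x ∂μ = 1) (hinv : Integrable (fun x => (f x)⁻¹ * w x) μ)
    (hlog : Integrable (fun x => Real.log (f x) * w x) μ) {c : ℝ} (hc : 0 < c) :
    Real.log c ≤ ∫ x, Real.log (f x) * w x ∂μ + c * ∫ x, (f x)⁻¹ * w x ∂μ - 1 := by
  have hf_inv : ∀ᵐ x ∂μ, 0 < (f x)⁻¹ := hf.mono fun x => inv_pos.2
  have h_pos : 0 < ∫ x, (f x)⁻¹ * w x ∂μ :=
    integral_mul_pos_of_integral_pos hf_inv hw hinv (by simp [hw_one])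
  have h_jensen := integral_log_mul_le_log_integral_mul hf_inv hw hw_one hinv
    (by simpa [Real.log_inv] using hlog.neg)
  simp only [Real.log_inv, neg_mul, integral_neg] at h_jensen
  have h_tangent := Real.log_le_sub_one_of_pos (mul_pos hc h_pos)
  rw [Real.log_mul hc.ne' h_pos.ne'] at h_tangent
  linarith

lemma integrable_log_mul (hf : ∀ᵐ x ∂μ, 0 < f x) (hw : 0 ≤ᵐ[μ] w)
    (hf_meas : AEMeasurable f μ) (hw_meas : AEStronglyMeasurable w μ)
    (hfw : Integrable (fun x => f x * w x) μ) (hinv : Integrable (fun x => (f x)⁻¹ * w x) μ) :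
    Integrable (fun x => Real.log (f x) * w x) μ := by
  refine (hfw.add hinv).mono' (hf_meas.log.aestronglyMeasurable.mul hw_meas) ?_
  filter_upwards [hf, hw] with x hfx hwx
  have h_abs : |Real.log (f x)| ≤ f x + (f x)⁻¹ :=
    abs_le.2 ⟨by linarith [Real.neg_inv_le_log hfx.le], by
      linarith [Real.log_le_self hfx.le, inv_pos.2 hfx]⟩
  rw [norm_mul, Real.norm_eq_abs, Real.norm_of_nonneg hwx, Pi.add_apply, ← add_mul]
  exact mul_le_mul_of_nonneg_right h_abs hwx

end JensenLog

section Spectral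

variable {𝕜 ι : Type*} [RCLike 𝕜] [Fintype ι] [DecidableEq ι] {A : Matrix ι ι 𝕜}

lemma trace_mul_eq_sum_eigenvalues_mul (hA : A.IsHermitian) (B : Matrix ι ι 𝕜) :
    (A * B).trace = ∑ i, (hA.eigenvalues i : 𝕜) *
      (star ⇑(hA.eigenvectorBasis i) ⬝ᵥ (B *ᵥ ⇑(hA.eigenvectorBasis i))) := by
  set U := (hA.eigenvectorUnitary : Matrix ι ι 𝕜)
  set D : Matrix ι ι 𝕜 := Matrix.diagonal (RCLike.ofReal ∘ hA.eigenvalues)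
  calc (A * B).trace = (U * D * star U * B).trace := by
        rw [← Unitary.conjStarAlgAut_apply (S := 𝕜), ← hA.spectral_theorem]
    _ = (D * (star U * (B * U))).trace := by
        rw [Matrix.mul_assoc U, Matrix.mul_assoc U, Matrix.trace_mul_comm U]
        simp only [Matrix.mul_assoc]
    _ = _ := by
        refine Finset.sum_congr rfl fun i _ => ?_
        rw [Matrix.diag_apply, Matrix.diagonal_mul]
        simp [U, Matrix.mul_apply, dotProduct, Matrix.mulVec, Matrix.star_apply]

lemma log_re_det_eq_sum_log_eigenvalues (hA : A.PosDef) :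
    Real.log (RCLike.re A.det) = ∑ i, Real.log (hA.isHermitian.eigenvalues i) := by
  rw [hA.isHermitian.det_eq_prod_eigenvalues, ← map_prod, RCLike.ofReal_re,
    Real.log_prod fun i _ => (hA.eigenvalues_pos i).ne']

end Spectral

lemma re_det_eq_det_map_re {ι : Type*} [Fintype ι] [DecidableEq ι] {A : Matrix ι ι ℂ}
    (hA : ∀ i j, (A i j).im = 0) : A.det.re = (A.map Complex.re).det := by
  have h_map : (A.map Complex.re).map Complex.ofRealHom = A :=
    Matrix.ext fun i j => Complex.ext rfl (hA i j).symm
  conv_lhs => rw [← h_map, ← RingHom.mapMatrix_apply, ← RingHom.map_det]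
  rfl

section Cesaro

lemma sum_Icc_neg_eq_add_add {M : Type*} [AddCommGroup M] (c : ℤ → M) (n : ℕ) :
    ∑ j ∈ Finset.Icc (-n : ℤ) n, c j =
      ∑ l ∈ Finset.range n, c (l - n) + ∑ m ∈ Finset.range n, c (n - m) + c 0 := by
  induction n with
  | zero => simp
  | succ n ih =>
    rw [Nat.cast_succ, Finset.sum_Icc_succ_eq_add_endpoints, ih, Finset.sum_range_succ',
      Finset.sum_range_succ' (fun m : ℕ => c (↑n + 1 - m))]
    simp only [Nat.cast_succ, add_sub_add_right_eq_sub, Nat.cast_zero, zero_sub, sub_zero]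
    abel

lemma sum_sum_sub_eq_sum_sum_Icc {M : Type*} [AddCommGroup M] (c : ℤ → M) (n : ℕ) :
    ∑ l : Fin n, ∑ m : Fin n, c (l - m) =
      ∑ k ∈ Finset.range n, ∑ j ∈ Finset.Icc (-k : ℤ) k, c j := by
  induction n with
  | zero => simp
  | succ n ih =>
    rw [Finset.sum_range_succ, ← ih, sum_Icc_neg_eq_add_add]
    simp only [Fin.sum_univ_castSucc, Fin.val_castSucc, Fin.val_last, sub_self,
      Finset.sum_add_distrib, Finset.sum_range]
    abel

lemma tendsto_cesaro_sum_sum_sub {E : Type*} [NormedAddCommGroup E] [NormedSpace ℝ E]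
    {c : ℤ → E} {s : E} (hc : HasSum c s (SummationFilter.symmetricIcc ℤ)) :
    Tendsto (fun n : ℕ => (n : ℝ)⁻¹ • ∑ l : Fin n, ∑ m : Fin n, c (l - m)) atTop (𝓝 s) := by
  simpa only [sum_sum_sub_eq_sum_sum_Icc] using
    (SummationFilter.hasSum_symmetricIcc_iff.1 hc).cesaro_smul

end Cesaro

section WeightedGram

variable {X 𝕜 ι : Type*} [MeasurableSpace X] [RCLike 𝕜]

/-- The matrix of the operator `∫ f(x) |e(x)⟩⟨e(x)| dμ(x)`, which is the Gram matrix of the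
coordinate functions of `e` for the weight `f`. Toeplitz matrices arise from vectors `e(x)` of
characters of the circle. -/
noncomputable def weightedGram (μ : Measure X) (e : X → EuclideanSpace 𝕜 ι) (f : X → ℝ) :
    Matrix ι ι 𝕜 :=
  Matrix.of fun l m => ∫ x, (f x : 𝕜) * (e x l * conj (e x m)) ∂μ

variable {μ : Measure X} {e : X → EuclideanSpace 𝕜 ι} {f : X → ℝ}

lemma isHermitian_weightedGram : (weightedGram μ e f).IsHermitian := by
  ext l m
  simp only [weightedGram, Matrix.conjTranspose_apply, Matrix.of_apply, RCLike.star_def]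
  rw [← integral_conj]
  simp [mul_comm]

variable [Fintype ι]

lemma integrable_weightedGram_entry (hf : AEStronglyMeasurable f μ) (he : AEStronglyMeasurable e μ)
    (hfe : Integrable (fun x => f x * ‖e x‖ ^ 2) μ) (l m : ι) :
    Integrable (fun x => (f x : 𝕜) * (e x l * conj (e x m))) μ := by
  have he_apply (k : ι) : AEStronglyMeasurable (fun x => e x k) μ :=
    (PiLp.continuous_apply 2 _ k).comp_aestronglyMeasurable he
  refine hfe.mono ((RCLike.continuous_ofReal.comp_aestronglyMeasurable hf).mul
    ((he_apply l).mul (RCLike.continuous_conj.comp_aestronglyMeasurable (he_apply m)))) ?_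
  refine Eventually.of_forall fun x => ?_
  rw [norm_mul, norm_mul, norm_mul, RCLike.norm_conj, RCLike.norm_ofReal, norm_pow, norm_norm, sq]
  rw [Real.norm_eq_abs]
  gcongr <;> exact PiLp.norm_apply_le (e x) _

lemma integrable_mul_norm_inner_sq (hf : AEStronglyMeasurable f μ)
    (he : AEStronglyMeasurable e μ) (hfe : Integrable (fun x => f x * ‖e x‖ ^ 2) μ)
    (v : EuclideanSpace 𝕜 ι) : Integrable (fun x => f x * ‖⟪e x, v⟫_𝕜‖ ^ 2) μ := by
  refine (hfe.mul_const (‖v‖ ^ 2)).mono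
    (hf.mul ((he.inner aestronglyMeasurable_const).norm.pow 2)) (Eventually.of_forall fun x => ?_)
  rw [mul_assoc, ← mul_pow, norm_mul, norm_mul, norm_pow, norm_pow, norm_norm, norm_mul, norm_norm,
    norm_norm]
  gcongr
  exact norm_inner_le_norm _ _

lemma dotProduct_weightedGram_mulVec (hf : AEStronglyMeasurable f μ)
    (he : AEStronglyMeasurable e μ) (hfe : Integrable (fun x => f x * ‖e x‖ ^ 2) μ)
    (v : EuclideanSpace 𝕜 ι) :
    star ⇑v ⬝ᵥ (weightedGram μ e f *ᵥ ⇑v) = ((∫ x, f x * ‖⟪e x, v⟫_𝕜‖ ^ 2 ∂μ : ℝ) : 𝕜) := by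
  have h_entry := integrable_weightedGram_entry hf he hfe
  calc star ⇑v ⬝ᵥ (weightedGram μ e f *ᵥ ⇑v)
      = ∑ l, ∑ m, ∫ x, conj (v l) * ((f x : 𝕜) * (e x l * conj (e x m)) * v m) ∂μ := by
        simp only [dotProduct, Matrix.mulVec, weightedGram, Matrix.of_apply, Finset.mul_sum,
          integral_const_mul, integral_mul_const, Pi.star_apply, RCLike.star_def]
    _ = ∫ x, ∑ l, ∑ m, conj (v l) * ((f x : 𝕜) * (e x l * conj (e x m)) * v m) ∂μ := by
        rw [integral_finsetSum _ fun l _ => integrable_finsetSum _ fun m _ =>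
          ((h_entry l m).mul_const _).const_mul _]
        refine Finset.sum_congr rfl fun l _ => ?_
        rw [integral_finsetSum _ fun m _ => ((h_entry l m).mul_const _).const_mul _]
    _ = ∫ x, ((f x * ‖⟪e x, v⟫_𝕜‖ ^ 2 : ℝ) : 𝕜) ∂μ := by
        refine integral_congr_ae (Eventually.of_forall fun x => ?_)
        simp only [RCLike.ofReal_pow, ← RCLike.conj_mul, PiLp.inner_apply,
          RCLike.inner_apply, map_sum, map_mul, RCLike.conj_conj, Finset.sum_mul_sum]
        simp only [Finset.mul_sum]
        refine Finset.sum_congr rfl fun l _ => Finset.sum_congr rfl fun m _ => by ring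
    _ = _ := integral_ofReal

lemma sum_integral_mul_norm_inner_sq (hf_meas : AEStronglyMeasurable f μ)
    (he : AEStronglyMeasurable e μ) (hfe : Integrable (fun x => f x * ‖e x‖ ^ 2) μ)
    (b : OrthonormalBasis ι 𝕜 (EuclideanSpace 𝕜 ι)) :
    ∑ i, ∫ x, f x * ‖⟪e x, b i⟫_𝕜‖ ^ 2 ∂μ = ∫ x, f x * ‖e x‖ ^ 2 ∂μ := by
  rw [← integral_finsetSum _ fun i _ => integrable_mul_norm_inner_sq hf_meas he hfe (b i)]
  simp_rw [← Finset.mul_sum, b.sum_sq_norm_inner_left]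

variable [DecidableEq ι]

lemma integral_norm_inner_sq_eq (he : MemLp e 2 μ) (h_one : weightedGram μ e (fun _ => 1) = 1)
    (v : EuclideanSpace 𝕜 ι) : ∫ x, ‖⟪e x, v⟫_𝕜‖ ^ 2 ∂μ = ‖v‖ ^ 2 := by
  have h := dotProduct_weightedGram_mulVec (f := fun _ => 1) aestronglyMeasurable_const
    he.aestronglyMeasurable (by simpa using he.integrable_norm_pow two_ne_zero) v
  rw [h_one, Matrix.one_mulVec, dotProduct_comm, ← EuclideanSpace.inner_eq_star_dotProduct,
    inner_self_eq_norm_sq_to_K] at h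
  simpa using (mod_cast h.symm : ∫ x, 1 * ‖⟪e x, v⟫_𝕜‖ ^ 2 ∂μ = ‖v‖ ^ 2)

lemma posDef_weightedGram (he : MemLp e 2 μ) (h_one : weightedGram μ e (fun _ => 1) = 1)
    (hf_meas : AEStronglyMeasurable f μ) (hf : ∀ᵐ x ∂μ, 0 < f x)
    (hfe : Integrable (fun x => f x * ‖e x‖ ^ 2) μ) : (weightedGram μ e f).PosDef := by
  refine .of_dotProduct_mulVec_pos isHermitian_weightedGram fun v hv => ?_
  have hv_norm : 0 < ‖WithLp.toLp 2 v‖ := by simpa using hv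
  rw [dotProduct_weightedGram_mulVec hf_meas he.aestronglyMeasurable hfe (WithLp.toLp 2 v),
    RCLike.ofReal_pos]
  refine integral_mul_pos_of_integral_pos hf (Eventually.of_forall fun x => by positivity)
    (integrable_mul_norm_inner_sq hf_meas he.aestronglyMeasurable hfe _) ?_
  rw [integral_norm_inner_sq_eq he h_one]
  positivity

theorem integral_log_mul_le_log_det_weightedGram (he : MemLp e 2 μ)
    (h_one : weightedGram μ e (fun _ => 1) = 1) (hf_meas : AEStronglyMeasurable f μ)
    (hf : ∀ᵐ x ∂μ, 0 < f x) (hfe : Integrable (fun x => f x * ‖e x‖ ^ 2) μ)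
    (hlog : Integrable (fun x => Real.log (f x) * ‖e x‖ ^ 2) μ) :
    ∫ x, Real.log (f x) * ‖e x‖ ^ 2 ∂μ ≤ Real.log (RCLike.re (weightedGram μ e f).det) := by
  have hA := posDef_weightedGram he h_one hf_meas hf hfe
  have he_meas := he.aestronglyMeasurable
  have hlog_meas := hf_meas.aemeasurable.log.aestronglyMeasurable
  rw [log_re_det_eq_sum_log_eigenvalues hA,
    ← sum_integral_mul_norm_inner_sq hlog_meas he_meas hlog hA.isHermitian.eigenvectorBasis]
  refine Finset.sum_le_sum fun i _ => ?_
  rw [hA.isHermitian.eigenvalues_eq, dotProduct_weightedGram_mulVec hf_meas he_meas hfe,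
    RCLike.ofReal_re]
  exact integral_log_mul_le_log_integral_mul hf (Eventually.of_forall fun x => by positivity)
    (by simp [integral_norm_inner_sq_eq he h_one])
    (integrable_mul_norm_inner_sq hf_meas he_meas hfe _)
    (integrable_mul_norm_inner_sq hlog_meas he_meas hlog _)

theorem log_det_weightedGram_le (he : MemLp e 2 μ)
    (h_one : weightedGram μ e (fun _ => 1) = 1) (hf_meas : AEStronglyMeasurable f μ)
    (hf : ∀ᵐ x ∂μ, 0 < f x) (hfe : Integrable (fun x => f x * ‖e x‖ ^ 2) μ)
    (hinv : Integrable (fun x => (f x)⁻¹ * ‖e x‖ ^ 2) μ) :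
    Real.log (RCLike.re (weightedGram μ e f).det) ≤ ∫ x, Real.log (f x) * ‖e x‖ ^ 2 ∂μ +
      RCLike.re (weightedGram μ e f * weightedGram μ e fun x => (f x)⁻¹).trace -
        Fintype.card ι := by
  have hA := posDef_weightedGram he h_one hf_meas hf hfe
  have he_meas := he.aestronglyMeasurable
  have hlog_meas := hf_meas.aemeasurable.log.aestronglyMeasurable
  have hinv_meas : AEStronglyMeasurable (fun x => (f x)⁻¹) μ :=
    hf_meas.aemeasurable.inv.aestronglyMeasurable
  have hlog : Integrable (fun x => Real.log (f x) * ‖e x‖ ^ 2) μ :=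
    integrable_log_mul hf (Eventually.of_forall fun x => by positivity) hf_meas.aemeasurable
      (he_meas.norm.pow 2) hfe hinv
  set b := hA.isHermitian.eigenvectorBasis
  set a := hA.isHermitian.eigenvalues
  have h_trace : RCLike.re (weightedGram μ e f * weightedGram μ e fun x => (f x)⁻¹).trace =
      ∑ i, a i * ∫ x, (f x)⁻¹ * ‖⟪e x, b i⟫_𝕜‖ ^ 2 ∂μ := by
    rw [trace_mul_eq_sum_eigenvalues_mul hA.isHermitian, map_sum]
    refine Finset.sum_congr rfl fun i _ => ?_
    rw [dotProduct_weightedGram_mulVec hinv_meas he_meas hinv, ← RCLike.ofReal_mul,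
      RCLike.ofReal_re]
  calc Real.log (RCLike.re (weightedGram μ e f).det)
      = ∑ i, Real.log (a i) := log_re_det_eq_sum_log_eigenvalues hA
    _ ≤ ∑ i, (∫ x, Real.log (f x) * ‖⟪e x, b i⟫_𝕜‖ ^ 2 ∂μ +
          a i * ∫ x, (f x)⁻¹ * ‖⟪e x, b i⟫_𝕜‖ ^ 2 ∂μ - 1) :=
        Finset.sum_le_sum fun i _ => log_le_integral_log_mul_add hf
          (Eventually.of_forall fun x => by positivity)
          (by simp [integral_norm_inner_sq_eq he h_one])
          (integrable_mul_norm_inner_sq hinv_meas he_meas hinv _)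
          (integrable_mul_norm_inner_sq hlog_meas he_meas hlog _) (hA.eigenvalues_pos i)
    _ = _ := by
        rw [Finset.sum_sub_distrib, Finset.sum_add_distrib, h_trace,
          sum_integral_mul_norm_inner_sq hlog_meas he_meas hlog]
        simp

end WeightedGram

section Toeplitz

/-- The `n × n` Toeplitz matrix with symbol coefficients `a`. -/
def toeplitz {α : Type*} (a : ℤ → α) (n : ℕ) : Matrix (Fin n) (Fin n) α :=
  Matrix.of fun l m => a (l - m)

lemma trace_toeplitz_mul_toeplitz {α : Type*} [NonUnitalNonAssocSemiring α] (a b : ℤ → α) (n : ℕ) :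
    (toeplitz a n * toeplitz b n).trace = ∑ l : Fin n, ∑ m : Fin n, a (l - m) * b (-(l - m)) := by
  simp [Matrix.trace, Matrix.mul_apply, toeplitz]

end Toeplitz

section Circle

open AddCircle

variable {T : ℝ}

/-- The vector of the characters `fourier (-l)`, `l < n`, evaluated at `x`; the signs make its Gram
matrices the Toeplitz matrices of Fourier coefficients. -/
noncomputable def fourierVec (n : ℕ) (x : AddCircle T) : EuclideanSpace ℂ (Fin n) :=
  WithLp.toLp 2 fun l => fourier (-(l : ℤ)) x

lemma continuous_fourierVec (n : ℕ) : Continuous (fourierVec n : AddCircle T → _) :=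
  (PiLp.continuous_toLp 2 _).comp (continuous_pi fun l => (fourier (-(l : ℤ))).continuous)

lemma norm_fourierVec_sq (n : ℕ) (x : AddCircle T) : ‖fourierVec n x‖ ^ 2 = n := by
  simp [EuclideanSpace.norm_sq_eq, fourierVec, Circle.norm_coe]

variable [hT : Fact (0 < T)]

lemma hasSum_fourierCoeff_mul_fourierCoeff_neg {f g : AddCircle T → ℂ}
    (hf : MemLp f 2 haarAddCircle) (hg : MemLp g 2 haarAddCircle) :
    HasSum (fun k => fourierCoeff f k * fourierCoeff g (-k)) (∫ x, f x * g x ∂haarAddCircle) := by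
  have hg_star : MemLp (star g) 2 haarAddCircle := hg.star
  have h_parseval := fourierBasis.hasSum_inner_mul_inner hg_star.toLp hf.toLp
  have h_inner : ⟪hg_star.toLp, hf.toLp⟫_ℂ = ∫ x, f x * g x ∂haarAddCircle := by
    rw [L2.inner_def]
    refine integral_congr_ae ?_
    filter_upwards [hf.coeFn_toLp, hg_star.coeFn_toLp] with x hfx hgx
    simp [hfx, hgx]
  have h_conj (k : ℤ) : conj (fourierCoeff (star g) k) = fourierCoeff g (-k) := by
    simp only [fourierCoeff, ← integral_conj]
    simp
  rw [h_inner] at h_parseval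
  refine h_parseval.congr_fun fun k => ?_
  rw [← inner_conj_symm, ← HilbertBasis.repr_apply_apply, ← HilbertBasis.repr_apply_apply,
    fourierBasis_repr, fourierBasis_repr, fourierCoeff_congr_ae hf.coeFn_toLp,
    fourierCoeff_congr_ae hg_star.coeFn_toLp, h_conj, mul_comm]

lemma tendsto_trace_toeplitz_mul_toeplitz {f g : AddCircle T → ℂ}
    (hf : MemLp f 2 haarAddCircle) (hg : MemLp g 2 haarAddCircle) :
    Tendsto (fun n : ℕ => (n : ℝ)⁻¹ •
      (toeplitz (fourierCoeff f) n * toeplitz (fourierCoeff g) n).trace) atTop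
      (𝓝 (∫ x, f x * g x ∂haarAddCircle)) := by
  simp only [trace_toeplitz_mul_toeplitz]
  exact tendsto_cesaro_sum_sum_sub
    (c := fun k => fourierCoeff f k * fourierCoeff g (-k))
    ((hasSum_fourierCoeff_mul_fourierCoeff_neg hf hg).mono_left
      (SummationFilter.symmetricIcc ℤ).le_atTop)

lemma memLp_fourierVec (n : ℕ) : MemLp (fourierVec n : AddCircle T → _) 2 haarAddCircle :=
  (continuous_fourierVec n).memLp_of_hasCompactSupport (.of_compactSpace _)

lemma weightedGram_fourierVec (f : AddCircle T → ℝ) (n : ℕ) :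
    weightedGram haarAddCircle (fourierVec n) f =
      toeplitz (fourierCoeff fun x => (f x : ℂ)) n := by
  ext l m
  simp only [weightedGram, fourierVec, toeplitz, Matrix.of_apply, fourierCoeff]
  refine integral_congr_ae (Eventually.of_forall fun x => ?_)
  simp only [← fourier_neg, ← fourier_add, smul_eq_mul]
  rw [mul_comm]
  congr 3
  ring

lemma weightedGram_fourierVec_one (n : ℕ) :
    weightedGram (haarAddCircle (T := T)) (fourierVec n) (fun _ => 1) = 1 := by
  have h_one : (fun _ => ((1 : ℝ) : ℂ)) = (fourier 0 : AddCircle T → ℂ) := by ext; simp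
  rw [weightedGram_fourierVec, h_one, fourierCoeff_fourier]
  ext l m
  simp [toeplitz, Pi.single_apply, Matrix.one_apply, sub_eq_zero, Fin.ext_iff]

variable {f : AddCircle T → ℝ}

lemma nat_mul_integral_log_le_log_det_toeplitz (hf : ∀ᵐ x ∂haarAddCircle, 0 < f x)
    (hf_int : Integrable f haarAddCircle)
    (hlog : Integrable (fun x => Real.log (f x)) haarAddCircle) (n : ℕ) :
    n * ∫ x, Real.log (f x) ∂haarAddCircle ≤
      Real.log (toeplitz (fourierCoeff fun x => (f x : ℂ)) n).det.re := by
  have h := integral_log_mul_le_log_det_weightedGram (memLp_fourierVec n)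
    (weightedGram_fourierVec_one n) hf_int.aestronglyMeasurable hf
    (by simpa only [norm_fourierVec_sq] using hf_int.mul_const _)
    (by simpa only [norm_fourierVec_sq] using hlog.mul_const _)
  simp only [norm_fourierVec_sq, integral_mul_const, weightedGram_fourierVec] at h
  rwa [mul_comm]

lemma log_det_toeplitz_le (hf : ∀ᵐ x ∂haarAddCircle, 0 < f x)
    (hf_int : Integrable f haarAddCircle)
    (hinv : Integrable (fun x => (f x)⁻¹) haarAddCircle) (n : ℕ) :
    Real.log (toeplitz (fourierCoeff fun x => (f x : ℂ)) n).det.re ≤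
      n * ∫ x, Real.log (f x) ∂haarAddCircle +
        (toeplitz (fourierCoeff fun x => (f x : ℂ)) n *
          toeplitz (fourierCoeff fun x => (((f x)⁻¹ : ℝ) : ℂ)) n).trace.re - n := by
  have h := log_det_weightedGram_le (memLp_fourierVec n)
    (weightedGram_fourierVec_one n) hf_int.aestronglyMeasurable hf
    (by simpa only [norm_fourierVec_sq] using hf_int.mul_const _)
    (by simpa only [norm_fourierVec_sq] using hinv.mul_const _)
  simp only [norm_fourierVec_sq, integral_mul_const, weightedGram_fourierVec, Fintype.card_fin] at h
  rwa [mul_comm (n : ℝ)]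

lemma tendsto_re_trace_toeplitz_mul_toeplitz_inv (hf : ∀ᵐ x ∂haarAddCircle, 0 < f x)
    (hf_memLp : MemLp f 2 haarAddCircle) (hinv_memLp : MemLp (fun x => (f x)⁻¹) 2 haarAddCircle) :
    Tendsto (fun n : ℕ => (n : ℝ)⁻¹ * (toeplitz (fourierCoeff fun x => (f x : ℂ)) n *
      toeplitz (fourierCoeff fun x => (((f x)⁻¹ : ℝ) : ℂ)) n).trace.re) atTop (𝓝 1) := by
  have h_mul_inv : ∫ x, (f x : ℂ) * (((f x)⁻¹ : ℝ) : ℂ) ∂haarAddCircle = 1 := by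
    rw [integral_congr_ae (g := fun _ => 1), integral_const, probReal_univ, one_smul]
    filter_upwards [hf] with x hfx
    rw [← ofReal_mul, mul_inv_cancel₀ hfx.ne', ofReal_one]
  have h := tendsto_trace_toeplitz_mul_toeplitz hf_memLp.ofReal (hinv_memLp.ofReal (K := ℂ))
  rw [← one_re, ← h_mul_inv]
  exact ((continuous_re.tendsto _).comp h).congr fun n => smul_re _ _

theorem tendsto_log_det_toeplitz_fourierCoeff (hf : ∀ᵐ x ∂haarAddCircle, 0 < f x)
    (hf_memLp : MemLp f 2 haarAddCircle) (hinv_memLp : MemLp (fun x => (f x)⁻¹) 2 haarAddCircle) :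
    Tendsto (fun n : ℕ => (n : ℝ)⁻¹ *
        Real.log (toeplitz (fourierCoeff fun x => (f x : ℂ)) n).det.re) atTop
      (𝓝 (∫ x, Real.log (f x) ∂haarAddCircle)) := by
  have hf_int : Integrable f haarAddCircle := hf_memLp.integrable one_le_two
  have hinv : Integrable (fun x => (f x)⁻¹) haarAddCircle := hinv_memLp.integrable one_le_two
  have hlog : Integrable (fun x => Real.log (f x)) haarAddCircle := by
    simpa using integrable_log_mul (w := fun _ => 1) hf (by simp [EventuallyLE])
      hf_int.aemeasurable aestronglyMeasurable_const (by simpa using hf_int) (by simpa using hinv)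
  have h_upper := ((tendsto_re_trace_toeplitz_mul_toeplitz_inv hf hf_memLp hinv_memLp).const_add
    (∫ x, Real.log (f x) ∂haarAddCircle)).sub_const 1
  rw [add_sub_cancel_right] at h_upper
  refine tendsto_of_tendsto_of_tendsto_of_le_of_le' tendsto_const_nhds h_upper ?_ ?_
  · filter_upwards [eventually_gt_atTop 0] with n hn
    rw [← div_eq_inv_mul, le_div_iff₀' (by positivity)]
    exact nat_mul_integral_log_le_log_det_toeplitz hf hf_int hlog n
  · filter_upwards [eventually_gt_atTop 0] with n hn
    rw [← div_eq_inv_mul, div_le_iff₀' (by positivity), mul_sub, mul_add,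
      mul_inv_cancel_left₀ (by positivity), mul_one]
    exact log_det_toeplitz_le hf hf_int hinv n

end Circle

section LiftIoc

open AddCircle

variable {T : ℝ} [hT : Fact (0 < T)] (a : ℝ)

lemma measurePreserving_coe_equivIoc :
    MeasurePreserving (fun x => (equivIoc T a x : ℝ)) haarAddCircle
      ((ENNReal.ofReal T)⁻¹ • volume.restrict (Set.Ioc a (a + T))) := by
  have h : MeasurePreserving (fun x => (equivIoc T a x : ℝ)) volume
      (volume.restrict (Set.Ioc a (a + T))) :=
    (measurePreserving_subtype_coe measurableSet_Ioc).comp (measurePreserving_equivIoc T)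
  have h_smul := h.smul_measure (ENNReal.ofReal T)⁻¹
  rwa [volume_eq_smul_haarAddCircle, smul_smul, ENNReal.inv_mul_cancel
    (by simpa using hT.out) ENNReal.ofReal_ne_top, one_smul] at h_smul

lemma memLp_haarAddCircle_liftIoc {E : Type*} [NormedAddCommGroup E] {f : ℝ → E} {p : ENNReal}
    (hf : MemLp f p (volume.restrict (Set.Ioc a (a + T)))) :
    MemLp (liftIoc T a f) p haarAddCircle :=
  (hf.smul_measure (c := (ENNReal.ofReal T)⁻¹) (by simpa using hT.out)).comp_measurePreserving
    (measurePreserving_coe_equivIoc a)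

lemma ae_haarAddCircle_liftIoc {E : Type*} {f : ℝ → E} {p : E → Prop}
    (hf : ∀ᵐ x ∂volume.restrict (Set.Ioc a (a + T)), p (f x)) :
    ∀ᵐ x ∂haarAddCircle (T := T), p (liftIoc T a f x) :=
  (measurePreserving_coe_equivIoc (T := T) a).quasiMeasurePreserving.ae (p := fun x => p (f x))
    (Measure.ae_smul_measure hf _)

end LiftIoc

section Interval

open AddCircle

theorem tendsto_log_det_toeplitz_fourierCoeffOn {a b : ℝ} (hab : a < b) {f : ℝ → ℝ}
    (hf : ∀ᵐ x ∂volume.restrict (Set.Ioc a b), 0 < f x)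
    (hf_memLp : MemLp f 2 (volume.restrict (Set.Ioc a b)))
    (hinv_memLp : MemLp (fun x => (f x)⁻¹) 2 (volume.restrict (Set.Ioc a b))) :
    Tendsto (fun n : ℕ => (n : ℝ)⁻¹ *
        Real.log (toeplitz (fourierCoeffOn hab fun x => (f x : ℂ)) n).det.re) atTop
      (𝓝 ((b - a)⁻¹ * ∫ x in a..b, Real.log (f x))) := by
  obtain ⟨T, rfl⟩ : ∃ T, b = a + T := ⟨b - a, by ring⟩
  have hT : Fact (0 < T) := ⟨by linarith⟩
  have hf_lift : ∀ᵐ x ∂haarAddCircle, 0 < liftIoc T a f x :=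
    ae_haarAddCircle_liftIoc (p := fun y => 0 < y) a hf
  have hinv_lift : MemLp (fun x => (liftIoc T a f x)⁻¹) 2 haarAddCircle :=
    memLp_haarAddCircle_liftIoc (f := fun x => (f x)⁻¹) a hinv_memLp
  have h := tendsto_log_det_toeplitz_fourierCoeff hf_lift
    (memLp_haarAddCircle_liftIoc a hf_memLp) hinv_lift
  have h_coeff : (fourierCoeff fun x => ((liftIoc T a f x : ℝ) : ℂ)) =
      fourierCoeffOn hab fun x => (f x : ℂ) :=
    funext fun k => fourierCoeff_liftIoc_eq (fun x => (f x : ℂ)) k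
  have h_integral : ∫ x, Real.log (liftIoc T a f x) ∂haarAddCircle =
      T⁻¹ * ∫ x in a..a + T, Real.log (f x) := by
    rw [integral_haarAddCircle, ← integral_liftIoc_eq_intervalIntegral]
    rfl
  rw [h_coeff, h_integral] at h
  rwa [add_sub_cancel_left]

lemma fourierCoeffOn_two_pi_mul_neg_eq_integral (f : ℝ → ℂ) (k : ℤ) :
    fourierCoeffOn (neg_lt_self Real.pi_pos) (fun x => 2 * Real.pi * f x) (-k) =
      ∫ x in (-Real.pi)..Real.pi, f x * Complex.exp (Complex.I * k * x) := by
  have hpi : (Real.pi : ℂ) ≠ 0 := mod_cast Real.pi_ne_zero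
  rw [fourierCoeffOn_eq_integral, ← intervalIntegral.integral_smul]
  refine intervalIntegral.integral_congr fun x _ => ?_
  simp only [fourier_coe_apply, neg_neg, sub_neg_eq_add, ← two_mul, Complex.real_smul, smul_eq_mul]
  push_cast
  have h_exp : 2 * Real.pi * Complex.I * k * x / (2 * Real.pi) = Complex.I * k * x := by field_simp
  rw [h_exp]
  field_simp

lemma im_integral_mul_exp_eq_zero_of_even {f : ℝ → ℝ} (hf : f.Even) (a : ℝ) (k : ℤ) :
    (∫ x in (-a)..a, (f x : ℂ) * Complex.exp (Complex.I * k * x)).im = 0 := by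
  rw [← Complex.conj_eq_iff_im, ← intervalIntegral.intervalIntegral_conj]
  have h_subst := intervalIntegral.integral_comp_neg (a := -a) (b := a)
    fun x : ℝ => (f x : ℂ) * Complex.exp (Complex.I * k * x)
  rw [neg_neg] at h_subst
  simp [← h_subst, hf _, ← Complex.exp_conj]

end Interval

lemma memLp_restrict_of_isCompact {X E : Type*} [TopologicalSpace X] [T2Space X]
    [MeasurableSpace X] [OpensMeasurableSpace X] [NormedAddCommGroup E] {μ : Measure X}
    [IsFiniteMeasureOnCompacts μ] {K : Set X} (hK : IsCompact K) {f : X → E}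
    (hf : ContinuousOn f K) (p : ENNReal) : MemLp f p (μ.restrict K) := by
  have : IsFiniteMeasure (μ.restrict K) := ⟨by simpa using hK.measure_lt_top⟩
  obtain ⟨C, hC⟩ := hK.exists_bound_of_continuousOn hf
  exact .of_bound (hf.aestronglyMeasurable_of_isCompact hK hK.measurableSet) C
    (ae_restrict_of_forall_mem hK.measurableSet hC)

theorem szego_limit_theorem_general {f : ℝ → ℝ}
    (hf : ∀ᵐ x ∂volume.restrict (Set.Ioc (-Real.pi) Real.pi), 0 < f x)
    (hf_memLp : MemLp f 2 (volume.restrict (Set.Ioc (-Real.pi) Real.pi)))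
    (hinv_memLp : MemLp (fun x => (f x)⁻¹) 2 (volume.restrict (Set.Ioc (-Real.pi) Real.pi))) :
    Tendsto (fun n : ℕ =>
        (1 / (n : ℝ)) * Real.log
          (Matrix.of fun l m : Fin n =>
            (∫ lam in (-Real.pi)..Real.pi,
              ((f lam : ℝ) : ℂ) *
                Complex.exp (Complex.I * (((l : ℤ) - (m : ℤ) : ℤ) : ℂ) * (lam : ℂ)))).det.re)
      atTop
      (nhds ((1 / (2 * Real.pi)) *
        ∫ lam in (-Real.pi)..Real.pi, Real.log (2 * Real.pi * f lam))) := by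
  have h := tendsto_log_det_toeplitz_fourierCoeffOn (neg_lt_self Real.pi_pos)
    (f := fun x => 2 * Real.pi * f x) (hf.mono fun x hx => by positivity)
    (hf_memLp.const_mul _) (by simpa only [mul_inv] using hinv_memLp.const_mul _)
  simp only [sub_neg_eq_add, ← two_mul, one_div] at h ⊢
  refine h.congr fun n => ?_
  rw [← Matrix.det_transpose]
  congr 4
  ext l m
  simp only [Matrix.transpose_apply, toeplitz, Matrix.of_apply,
    ← fourierCoeffOn_two_pi_mul_neg_eq_integral, neg_sub, ofReal_mul, ofReal_ofNat]

/-- The first Szegő limit theorem (Whittle's approximation of the log-determinant):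
for `f` continuous, even, strictly positive on `[-π,π]` with `f(-π) = f(π)`,
`(1/n) log det T_n(f) → (1/(2π)) ∫_{-π}^{π} log(2π f(λ)) dλ`, where `T_n(f)` is the
`n×n` Toeplitz matrix with entries `γ_f(l-m)`. -/
theorem szego_limit_theorem (f : ℝ → ℝ)
    (hc : ContinuousOn f (Set.Icc (-Real.pi) Real.pi))
    (hEven : ∀ lam : ℝ, f (-lam) = f lam)
    (hPos : ∀ lam ∈ Set.Icc (-Real.pi) Real.pi, 0 < f lam)
    (hPer : f (-Real.pi) = f Real.pi) :
    Tendsto (fun n : ℕ =>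
        (1 / (n : ℝ)) * Real.log
          (Matrix.of fun l m : Fin n =>
            (∫ lam in (-Real.pi)..Real.pi,
              ((f lam : ℝ) : ℂ) *
                Complex.exp (Complex.I * (((l : ℤ) - (m : ℤ) : ℤ) : ℂ) * (lam : ℂ))).re).det)
      atTop
      (nhds ((1 / (2 * Real.pi)) *
        ∫ lam in (-Real.pi)..Real.pi, Real.log (2 * Real.pi * f lam))) := by
  have h_le : volume.restrict (Set.Ioc (-Real.pi) Real.pi) ≤
      volume.restrict (Set.Icc (-Real.pi) Real.pi) :=
    Measure.restrict_mono_set volume Set.Ioc_subset_Icc_self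
  have h_inv := hc.inv₀ fun x hx => (hPos x hx).ne'
  have h_log_det := szego_limit_theorem_general
    (ae_restrict_of_forall_mem measurableSet_Ioc fun x hx => hPos x (Set.Ioc_subset_Icc_self hx))
    ((memLp_restrict_of_isCompact isCompact_Icc hc 2).mono_measure h_le)
    ((memLp_restrict_of_isCompact isCompact_Icc h_inv 2).mono_measure h_le)
  refine h_log_det.congr fun n => ?_
  rw [re_det_eq_det_map_re]
  · rfl
  · exact fun l m => im_integral_mul_exp_eq_zero_of_even hEven Real.pi (l - m)
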